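/- In the concrete quasi-free CAR model with past P = {n ∈ ℤ : n < 0} and future F = {n ∈ ℤ : n ≥ 0}: assume there is ε ∈ (0,1/2) with ε ≤ λ_l ≤ 1−ε and λ_l ≠ 1/2 for all l ∈ ℤ. Let S := {a_l : l ∈ ℤ} ∪ {a_l* : l ∈ ℤ} ⊆ B(H), and denote by S′ its commutant in B(H) and S″ the commutant of S′. Suppose T ∈ B(H) satisfies T∘a_l = a_l∘T and T∘a_l* = a_l*∘T for every l ∈ F, and T ∈ S″. Then TΩ belongs to the closed linear span of {e_{(A,B)} : A ⊆ P, B ⊆ P finite, card A ≡ card B (mod 2)}. (S″ is the quasi-free CAR factor M_R and the hypothesis says T ∈ α_t(M_R)′ ∩ M_R.) -/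

import Mathlib

/- The concrete quasi-free CAR model: `H = ℓ²(Finset ℤ × Finset ℤ)` with orthonormal basis
`e (A, B)`, vacuum `Ω = e (∅, ∅)`, and operators `a l`, `b l`, `G` given on the basis by the
quasi-free formulas with symbol `λ` (diagonal, `R h_l = λ_l h_l`). -/

noncomputable section

/-- The GNS Hilbert space: `ℓ²` over pairs of finite subsets of `ℤ`. -/
abbrev CARSpace := lp (fun _ : Finset ℤ × Finset ℤ => ℂ) 2

/-- The orthonormal basis vector `e_{(A,B)}`. -/
def carE (p : Finset ℤ × Finset ℤ) : CARSpace := lp.single 2 p 1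

/-- The vacuum vector `Ω = e_{(∅,∅)}`. -/
def carΩ : CARSpace := carE (∅, ∅)

/-- `n(l, X)` = number of elements of `X` strictly below `l`. -/
def nlt (l : ℤ) (X : Finset ℤ) : ℕ := (X.filter fun j => j < l).card

/-- `a` is the family of quasi-free annihilation-type operators `a_l = π_R(a(h_l))`:
`a_l e_{(A,B)} = √(1−λ_l)·(−1)^{|B|}·(−1)^{n(l,A)}·[l ∉ A]·e_{(A∪{l},B)}
              + √(λ_l)·(−1)^{n(l,B)}·[l ∈ B]·e_{(A,B∖{l})}`. -/
def IsCAR_a (lam : ℤ → ℝ) (a : ℤ → CARSpace →L[ℂ] CARSpace) : Prop :=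
  ∀ (l : ℤ) (A B : Finset ℤ),
    a l (carE (A, B)) =
      ((Real.sqrt (1 - lam l) : ℂ) * (-1) ^ B.card * (-1) ^ nlt l A *
          (if l ∈ A then 0 else 1)) • carE (insert l A, B) +
      ((Real.sqrt (lam l) : ℂ) * (-1) ^ nlt l B *
          (if l ∈ B then 1 else 0)) • carE (A, B.erase l)

/-- `b` is the family of commutant quasi-free operators:
`b_l e_{(A,B)} = √(λ_l)·(−1)^{|B|}·(−1)^{n(l,A)}·[l ∉ A]·e_{(A∪{l},B)}
              − √(1−λ_l)·(−1)^{n(l,B)}·[l ∈ B]·e_{(A,B∖{l})}`. -/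
def IsCAR_b (lam : ℤ → ℝ) (b : ℤ → CARSpace →L[ℂ] CARSpace) : Prop :=
  ∀ (l : ℤ) (A B : Finset ℤ),
    b l (carE (A, B)) =
      ((Real.sqrt (lam l) : ℂ) * (-1) ^ B.card * (-1) ^ nlt l A *
          (if l ∈ A then 0 else 1)) • carE (insert l A, B) -
      ((Real.sqrt (1 - lam l) : ℂ) * (-1) ^ nlt l B *
          (if l ∈ B then 1 else 0)) • carE (A, B.erase l)

/-- `G = Γ⊗Γ` : `G e_{(A,B)} = (−1)^{|A|+|B|} e_{(A,B)}`. -/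
def IsCAR_G (G : CARSpace →L[ℂ] CARSpace) : Prop :=
  ∀ (A B : Finset ℤ), G (carE (A, B)) = ((-1 : ℂ) ^ (A.card + B.card)) • carE (A, B)

/-- The "past" subspace: closed linear span of the `e_{(A,B)}` with `A, B ⊆ P = {n < 0}`
and `card A ≡ card B (mod 2)`. -/
def pastSpan : Set CARSpace :=
  closure (Submodule.span ℂ
    {v : CARSpace | ∃ A B : Finset ℤ,
      (∀ n ∈ A, n < 0) ∧ (∀ n ∈ B, n < 0) ∧ A.card % 2 = B.card % 2 ∧ v = carE (A, B)} :
    Set CARSpace)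

/-! Let `Γ` be the parity. Since `b_k` anticommutes with every `a_l` and `a_l*`, both `b_k Γ` and
`b_k* Γ` lie in `S′`, so `T` commutes with them, and for future `l` also with `a_l` and `a_l*`.
The vacuum is fixed by `Γ` and annihilated by the ordinary annihilation operators, which are linear
combinations of `a_l` and `b_l`, respectively of `a_l*` and `b_l*`. Moving such a combination past
`T` and splitting `TΩ` by parity gives two facts. The even part of `TΩ` is again annihilated at
every future mode, so it is supported on the past. On the odd part `w` the sign of `b_l*` flips:
`(1 − 2 λ_l) c_l w + 2 √(λ_l (1 − λ_l)) d_l* w = 0`, where `c_l` and `d_l` annihilate the mode `l`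
of `A` and of `B`. Hence filling both modes of an unoccupied future `l` multiplies the squared
modulus of a coefficient of `w` by at least `λ_l (1 − λ_l)`. As `∑ λ_l (1 − λ_l) = ∞` over the
future, a nonzero coefficient would contradict square-summability, so `w = 0`. -/

open Filter
open scoped symmDiff ComplexConjugate lp ENNReal

section WeightedPerm

variable {𝕜 κ : Type*} [RCLike 𝕜]

lemma memℓp_comp_equiv (σ : Equiv.Perm κ) (v : ℓ²(κ, 𝕜)) : Memℓp (v ∘ σ) 2 :=
  memℓp_gen (((lp.memℓp v).summable (by norm_num)).comp_injective σ.injective)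

/-- Reindexing of square-summable families along a permutation. -/
def lpReindex (σ : Equiv.Perm κ) : ℓ²(κ, 𝕜) →ₗᵢ[𝕜] ℓ²(κ, 𝕜) where
  toFun v := ⟨v ∘ σ, memℓp_comp_equiv σ v⟩
  map_add' _ _ := rfl
  map_smul' _ _ := rfl
  norm_map' v := by
    have h2 : 0 < (2 : ℝ≥0∞).toReal := by norm_num
    rw [lp.norm_eq_tsum_rpow h2, lp.norm_eq_tsum_rpow h2,
      ← σ.tsum_eq fun p => ‖v p‖ ^ (2 : ℝ≥0∞).toReal]
    rfl

/-- The weighted permutation operator `(W v)(p) = w p * v (σ p)` on `ℓ²`, for a bounded weight. -/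
def weightedPerm (w : κ → 𝕜) {C : ℝ} (hC : 0 ≤ C) (hw : ∀ p, ‖w p‖ ≤ C) (σ : Equiv.Perm κ) :
    ℓ²(κ, 𝕜) →L[𝕜] ℓ²(κ, 𝕜) :=
  lp.mapCLM 2 (fun p => ContinuousLinearMap.mul 𝕜 𝕜 (w p)) hC
      (fun p => (ContinuousLinearMap.opNorm_mul_apply_le 𝕜 𝕜 (w p)).trans (hw p)) ∘L
    (lpReindex σ).toContinuousLinearMap

variable {w : κ → 𝕜} {C : ℝ} {hC : 0 ≤ C} {hw : ∀ p, ‖w p‖ ≤ C} {σ : Equiv.Perm κ}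

lemma weightedPerm_apply (v : ℓ²(κ, 𝕜)) (p : κ) :
    weightedPerm w hC hw σ v p = w p * v (σ p) := rfl

lemma weightedPerm_single [DecidableEq κ] (p : κ) (c : 𝕜) :
    weightedPerm w hC hw σ (lp.single 2 p c) =
      w (σ.symm p) • lp.single 2 (σ.symm p) c := by
  ext q
  simp only [weightedPerm_apply, lp.coeFn_smul, Pi.smul_apply, smul_eq_mul, lp.single_apply,
    Pi.single_apply, Equiv.eq_symm_apply]
  split_ifs with h
  · rw [← h, Equiv.symm_apply_apply]
  · rw [mul_zero, mul_zero]

lemma star_weightedPerm {w' : κ → 𝕜} {hw' : ∀ p, ‖w' p‖ ≤ C}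
    (h : ∀ p, w' p = conj (w (σ.symm p))) :
    star (weightedPerm w hC hw σ) = weightedPerm w' hC hw' σ.symm := by
  rw [ContinuousLinearMap.star_eq_adjoint, eq_comm, ContinuousLinearMap.eq_adjoint_iff]
  intro u v
  rw [lp.inner_eq_tsum, lp.inner_eq_tsum, ← σ.tsum_eq]
  refine tsum_congr fun p => ?_
  simp only [weightedPerm_apply, RCLike.inner_apply, map_mul, RCLike.conj_conj, h,
    Equiv.symm_apply_apply]
  ring

end WeightedPerm

section Configurations

variable {κ ι : Type*}

lemma symmDiff_singleton_of_mem [DecidableEq ι] {i : ι} {X : Finset ι} (h : i ∈ X) :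
    X ∆ {i} = X.erase i := by grind [Finset.mem_symmDiff]

lemma symmDiff_singleton_of_notMem [DecidableEq ι] {i : ι} {X : Finset ι} (h : i ∉ X) :
    X ∆ {i} = insert i X := by grind [Finset.mem_symmDiff]

lemma neg_one_pow_card_symmDiff_singleton [DecidableEq ι] (i : ι) (X : Finset ι) :
    (-1 : ℂ) ^ (X ∆ {i}).card = -(-1) ^ X.card := by
  by_cases h : i ∈ X
  · rw [symmDiff_singleton_of_mem h, ← Finset.card_erase_add_one h, pow_succ, mul_neg_one,
      neg_neg]
  · rw [symmDiff_singleton_of_notMem h, Finset.card_insert_of_notMem h, pow_succ, mul_neg_one]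

/-- Toggling the occupation of the mode `i`, for configurations `κ` labelled by their finite set
of occupied modes. -/
def flipMode [DecidableEq ι] (occ : κ ≃ Finset ι) (i : ι) : Equiv.Perm κ :=
  Function.Involutive.toPerm (fun p => occ.symm (occ p ∆ {i}))
    fun p => by simp only [Equiv.apply_symm_apply, symmDiff_symmDiff_cancel_right,
      Equiv.symm_apply_apply]

variable [DecidableEq ι] (occ : κ ≃ Finset ι)

lemma occ_flipMode (i : ι) (p : κ) : occ (flipMode occ i p) = occ p ∆ {i} :=
  occ.apply_symm_apply _

lemma flipMode_flipMode (i : ι) (p : κ) : flipMode occ i (flipMode occ i p) = p :=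
  (flipMode occ i).symm_apply_apply p

lemma flipMode_comm (i j : ι) (p : κ) :
    flipMode occ i (flipMode occ j p) = flipMode occ j (flipMode occ i p) :=
  occ.injective (by simp only [occ_flipMode, symmDiff_right_comm])

variable {occ}

lemma mem_occ_flipMode_self {i : ι} {p : κ} : i ∈ occ (flipMode occ i p) ↔ i ∉ occ p := by
  simp [occ_flipMode, Finset.mem_symmDiff]

lemma mem_occ_flipMode_of_ne {i j : ι} (hij : i ≠ j) {p : κ} :
    i ∈ occ (flipMode occ j p) ↔ i ∈ occ p := by
  simp [occ_flipMode, Finset.mem_symmDiff, hij]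

end Configurations

section JordanWigner

variable {ι : Type*} [LinearOrder ι]

/-- The Jordan–Wigner sign of the mode `i` in a configuration with occupied modes `X`. -/
def jwSign (i : ι) (X : Finset ι) : ℂ := (-1) ^ (X.filter (· < i)).card

lemma jwSign_symmDiff_singleton (i j : ι) (X : Finset ι) :
    jwSign i (X ∆ {j}) = (if j < i then -1 else 1) * jwSign i X := by
  unfold jwSign
  split_ifs with h
  · have hX : (X ∆ {j}).filter (· < i) = X.filter (· < i) ∆ {j} := by
      grind [Finset.mem_symmDiff]
    rw [hX, neg_one_pow_card_symmDiff_singleton, neg_one_mul]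
  · have hX : (X ∆ {j}).filter (· < i) = X.filter (· < i) := by
      grind [Finset.mem_symmDiff]
    rw [hX, one_mul]

lemma jwSign_mul_self (i : ι) (X : Finset ι) : jwSign i X * jwSign i X = 1 := by
  rw [jwSign, ← mul_pow, neg_one_mul, neg_neg, one_pow]

lemma norm_jwSign (i : ι) (X : Finset ι) : ‖jwSign i X‖ = 1 := by
  rw [jwSign, norm_pow, norm_neg, norm_one, one_pow]

lemma conj_jwSign (i : ι) (X : Finset ι) : conj (jwSign i X) = jwSign i X := by
  rw [jwSign, map_pow, map_neg, map_one]

variable {κ : Type*} {occ : κ ≃ Finset ι}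

lemma jwSign_occ_flipMode_self (i : ι) (p : κ) :
    jwSign i (occ (flipMode occ i p)) = jwSign i (occ p) := by
  rw [occ_flipMode, jwSign_symmDiff_singleton, if_neg (lt_irrefl i), one_mul]

lemma jwSign_mul_jwSign_flipMode {i j : ι} (hij : i ≠ j) (p : κ) :
    jwSign i (occ p) * jwSign j (occ (flipMode occ i p)) =
      -(jwSign j (occ p) * jwSign i (occ (flipMode occ j p))) := by
  simp only [occ_flipMode, jwSign_symmDiff_singleton]
  rcases hij.lt_or_gt with h | h <;> simp only [h, h.not_gt, if_true, if_false] <;> ring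

end JordanWigner

section Parity

variable {κ ι : Type*} (occ : κ ≃ Finset ι)

/-- The parity operator `(-1)^N` on the fermionic Fock space `ℓ²(κ)`, `N` being the number of
occupied modes. -/
def parity : ℓ²(κ, ℂ) →L[ℂ] ℓ²(κ, ℂ) :=
  weightedPerm (fun p => (-1) ^ (occ p).card) zero_le_one (fun p => by simp) (Equiv.refl κ)

lemma parity_apply (v : ℓ²(κ, ℂ)) (p : κ) : parity occ v p = (-1) ^ (occ p).card * v p := rfl

lemma star_parity : star (parity occ) = parity occ :=
  star_weightedPerm fun p => by simp

lemma parity_mul_self : parity occ * parity occ = 1 := by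
  ext v p
  simp only [mul_apply_eq_comp, parity_apply, one_apply_eq_self]
  rw [← mul_assoc, ← mul_pow, neg_one_mul, neg_neg, one_pow, one_mul]

lemma parity_single_of_occ_eq_empty [DecidableEq κ] {p : κ} (hp : occ p = ∅) (c : ℂ) :
    parity occ (lp.single 2 p c) = lp.single 2 p c := by
  simp [parity, weightedPerm_single, hp]

variable {occ}

lemma coeff_add_parity (v : ℓ²(κ, ℂ)) {p : κ} (hp : Even (occ p).card) :
    (v + parity occ v) p = 2 * v p := by
  rw [lp.coeFn_add, Pi.add_apply, parity_apply, hp.neg_one_pow]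
  ring

lemma coeff_sub_parity (v : ℓ²(κ, ℂ)) {p : κ} (hp : Odd (occ p).card) :
    (v - parity occ v) p = 2 * v p := by
  rw [lp.coeFn_sub, Pi.sub_apply, parity_apply, hp.neg_one_pow]
  ring

end Parity

section Fock

variable {κ ι : Type*} [LinearOrder ι] (occ : κ ≃ Finset ι)

/-- The annihilation operator of the mode `i` on the fermionic Fock space `ℓ²(κ)`, in the
Jordan–Wigner form; the creation operator is its adjoint. -/
def ann (i : ι) : ℓ²(κ, ℂ) →L[ℂ] ℓ²(κ, ℂ) :=
  weightedPerm (fun p => if i ∈ occ p then 0 else jwSign i (occ p)) zero_le_one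
    (fun p => by split_ifs <;> simp [norm_jwSign]) (flipMode occ i)

lemma ann_apply (i : ι) (v : ℓ²(κ, ℂ)) (p : κ) :
    ann occ i v p = (if i ∈ occ p then 0 else jwSign i (occ p)) * v (flipMode occ i p) := rfl

lemma ann_single [DecidableEq κ] (i : ι) (p : κ) (c : ℂ) :
    ann occ i (lp.single 2 p c) =
      (if i ∈ occ p then jwSign i (occ p) else 0) • lp.single 2 (flipMode occ i p) c := by
  rw [ann, weightedPerm_single]
  change (if i ∈ occ (flipMode occ i p) then 0 else jwSign i (occ (flipMode occ i p))) • _ = _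
  simp only [mem_occ_flipMode_self, jwSign_occ_flipMode_self, ite_not]
  rfl

lemma star_ann (i : ι) : star (ann occ i) =
    weightedPerm (fun p => if i ∈ occ p then jwSign i (occ p) else 0) zero_le_one
      (fun p => by split_ifs <;> simp [norm_jwSign]) (flipMode occ i) := by
  refine star_weightedPerm fun p => ?_
  change _ = conj (if i ∈ occ (flipMode occ i p) then 0 else jwSign i (occ (flipMode occ i p)))
  simp only [mem_occ_flipMode_self, jwSign_occ_flipMode_self, ite_not, apply_ite conj, map_zero,
    conj_jwSign]

lemma star_ann_apply (i : ι) (v : ℓ²(κ, ℂ)) (p : κ) : star (ann occ i) v p =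
    (if i ∈ occ p then jwSign i (occ p) else 0) * v (flipMode occ i p) := by
  rw [star_ann, weightedPerm_apply]

lemma star_ann_single [DecidableEq κ] (i : ι) (p : κ) (c : ℂ) :
    star (ann occ i) (lp.single 2 p c) =
      (if i ∈ occ p then 0 else jwSign i (occ p)) • lp.single 2 (flipMode occ i p) c := by
  rw [star_ann, weightedPerm_single]
  change (if i ∈ occ (flipMode occ i p) then jwSign i (occ (flipMode occ i p)) else 0) • _ = _
  simp only [mem_occ_flipMode_self, jwSign_occ_flipMode_self, ite_not]
  rfl

lemma ann_mul_ann (i j : ι) : ann occ i * ann occ j = -(ann occ j * ann occ i) := by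
  ext v p
  simp only [mul_apply_eq_comp, neg_apply, lp.coeFn_neg, Pi.neg_apply, ann_apply]
  rcases eq_or_ne i j with rfl | hij
  · by_cases h : i ∈ occ p <;> simp [h, mem_occ_flipMode_self]
  · simp only [mem_occ_flipMode_of_ne hij, mem_occ_flipMode_of_ne hij.symm, flipMode_comm occ j i]
    by_cases hi : i ∈ occ p <;> by_cases hj : j ∈ occ p <;>
      simp [hi, hj, ← mul_assoc, jwSign_mul_jwSign_flipMode hij]

lemma star_ann_mul_star_ann (i j : ι) :
    star (ann occ i) * star (ann occ j) = -(star (ann occ j) * star (ann occ i)) := by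
  rw [← star_mul, ann_mul_ann, star_neg, star_mul]

lemma ann_mul_star_ann (i j : ι) : ann occ i * star (ann occ j) =
    (if i = j then 1 else 0) - star (ann occ j) * ann occ i := by
  ext v p
  simp only [mul_apply_eq_comp, sub_apply, lp.coeFn_sub, Pi.sub_apply, ann_apply, star_ann_apply]
  rcases eq_or_ne i j with rfl | hij
  · rw [if_pos rfl, one_apply_eq_self]
    by_cases h : i ∈ occ p <;>
      simp [h, mem_occ_flipMode_self, flipMode_flipMode, jwSign_occ_flipMode_self, ← mul_assoc,
        jwSign_mul_self]
  · simp only [if_neg hij, zero_apply, lp.coeFn_zero, Pi.zero_apply, mem_occ_flipMode_of_ne hij,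
      mem_occ_flipMode_of_ne hij.symm, flipMode_comm occ j i]
    by_cases hi : i ∈ occ p <;> by_cases hj : j ∈ occ p <;>
      simp [hi, hj, ← mul_assoc, jwSign_mul_jwSign_flipMode hij]

lemma parity_mul_ann (i : ι) : parity occ * ann occ i = -(ann occ i * parity occ) := by
  ext v p
  simp only [mul_apply_eq_comp, neg_apply, lp.coeFn_neg, Pi.neg_apply, ann_apply, parity_apply,
    occ_flipMode, neg_one_pow_card_symmDiff_singleton]
  ring

lemma parity_mul_star_ann (i : ι) :
    parity occ * star (ann occ i) = -(star (ann occ i) * parity occ) := by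
  have h := congrArg star (parity_mul_ann occ i)
  rw [star_neg, star_mul, star_mul, star_parity] at h
  rw [h, neg_neg]

variable {occ}

lemma ann_single_of_occ_eq_empty [DecidableEq κ] {p : κ} (hp : occ p = ∅) (i : ι) (c : ℂ) :
    ann occ i (lp.single 2 p c) = 0 := by
  rw [ann_single, hp, if_neg (Finset.notMem_empty i), zero_smul]

lemma norm_ann_apply_of_notMem {i : ι} {p : κ} (hi : i ∉ occ p) (v : ℓ²(κ, ℂ)) :
    ‖ann occ i v p‖ = ‖v (flipMode occ i p)‖ := by
  rw [ann_apply, if_neg hi, norm_mul, norm_jwSign, one_mul]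

lemma norm_star_ann_apply_of_mem {i : ι} {p : κ} (hi : i ∈ occ p) (v : ℓ²(κ, ℂ)) :
    ‖star (ann occ i) v p‖ = ‖v (flipMode occ i p)‖ := by
  rw [star_ann_apply, if_pos hi, norm_mul, norm_jwSign, one_mul]

lemma coeff_eq_zero_of_ann_eq_zero {i : ι} {v : ℓ²(κ, ℂ)} (h : ann occ i v = 0) {p : κ}
    (hi : i ∈ occ p) : v p = 0 := by
  have hi' : i ∉ occ (flipMode occ i p) := by simpa [mem_occ_flipMode_self] using hi
  rw [← norm_eq_zero, ← flipMode_flipMode occ i p, ← norm_ann_apply_of_notMem hi', h,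
    lp.coeFn_zero, Pi.zero_apply, norm_zero]

lemma norm_coeff_flipMode_flipMode {i j : ι} (hij : i ≠ j) {s t : ℂ} {v : ℓ²(κ, ℂ)}
    (h : s • ann occ i v + t • star (ann occ j) v = 0) {p : κ} (hi : i ∉ occ p) (hj : j ∉ occ p) :
    ‖s‖ * ‖v (flipMode occ i (flipMode occ j p))‖ = ‖t‖ * ‖v p‖ := by
  have hi' : i ∉ occ (flipMode occ j p) := by rwa [mem_occ_flipMode_of_ne hij]
  have hj' : j ∈ occ (flipMode occ j p) := mem_occ_flipMode_self.2 hj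
  have hp : s * ann occ i v (flipMode occ j p) = -(t * star (ann occ j) v (flipMode occ j p)) :=
    eq_neg_of_add_eq_zero_left (congrArg (fun u : ℓ²(κ, ℂ) => u (flipMode occ j p)) h)
  rw [← norm_ann_apply_of_notMem hi', ← norm_mul, hp, norm_neg, norm_mul,
    norm_star_ann_apply_of_mem hj', flipMode_flipMode]

lemma coeff_eq_zero_of_ann_even_part_eq_zero {i : ι} {v : ℓ²(κ, ℂ)}
    (h : ann occ i (v + parity occ v) = 0) {p : κ} (hp : Even (occ p).card)
    (hi : i ∈ occ p) : v p = 0 := by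
  have hv := coeff_eq_zero_of_ann_eq_zero h hi
  rw [coeff_add_parity v hp] at hv
  exact (mul_eq_zero.1 hv).resolve_left two_ne_zero

lemma mul_sq_norm_le_of_smul_ann_add_smul_star_ann
    {i j : ι} (hij : i ≠ j) {t : ℝ} (ht : t ∈ Set.Icc 0 1) {v : ℓ²(κ, ℂ)}
    (h : ((1 - 2 * t : ℝ) : ℂ) • ann occ i v +
      ((2 * (√(1 - t) * √t) : ℝ) : ℂ) • star (ann occ j) v = 0)
    {p : κ} (hi : i ∉ occ p) (hj : j ∉ occ p) :
    t * (1 - t) * ‖v p‖ ^ 2 ≤ ‖v (flipMode occ i (flipMode occ j p))‖ ^ 2 := by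
  set q := flipMode occ i (flipMode occ j p)
  have hnorm : |1 - 2 * t| * ‖v q‖ = |2 * (√(1 - t) * √t)| * ‖v p‖ := by
    simpa only [Complex.norm_real, Real.norm_eq_abs] using
      norm_coeff_flipMode_flipMode hij h hi hj
  have hsq : (1 - 2 * t) ^ 2 * ‖v q‖ ^ 2 = 4 * (t * (1 - t)) * ‖v p‖ ^ 2 := by
    rw [← sq_abs (1 - 2 * t), ← mul_pow, hnorm, mul_pow, sq_abs, mul_pow, mul_pow,
      Real.sq_sqrt ht.1, Real.sq_sqrt (sub_nonneg.2 ht.2)]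
    ring
  have hpos : 0 ≤ t * (1 - t) := mul_nonneg ht.1 (sub_nonneg.2 ht.2)
  have hle : (1 - 2 * t) ^ 2 ≤ 1 := by linarith
  calc t * (1 - t) * ‖v p‖ ^ 2 ≤ 4 * (t * (1 - t)) * ‖v p‖ ^ 2 :=
        mul_le_mul_of_nonneg_right (by linarith) (sq_nonneg _)
    _ = (1 - 2 * t) ^ 2 * ‖v q‖ ^ 2 := hsq.symm
    _ ≤ ‖v q‖ ^ 2 := mul_le_of_le_one_left (sq_nonneg _) hle

end Fock

lemma commute_mul_of_anticommute {R : Type*} [Ring R] {x y z : R} (hx : x * z = -(z * x))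
    (hy : y * z = -(z * y)) : Commute (x * y) z := by
  rw [Commute, SemiconjBy, mul_assoc, hy, mul_neg, ← mul_assoc, ← mul_assoc, hx, neg_mul, neg_neg]

section EvenOdd

variable {𝕜 E : Type*} [NormedField 𝕜] [SeminormedAddCommGroup E] [NormedSpace 𝕜 E]
  {Γ A B T : E →L[𝕜] E} {Ω : E} (hTA : Commute T A) (hTB : Commute T (B * Γ))
  (hΓ : Γ * Γ = 1) (hA : Γ * A = -(A * Γ)) (hB : Γ * B = -(B * Γ)) (hΓΩ : Γ Ω = Ω) {s t : 𝕜}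
  (h : (s • A + t • B) Ω = 0)

include hTA hTB hΓΩ h in
lemma apply_add_apply_parity_eq_zero : s • A (T Ω) + t • B (Γ (T Ω)) = 0 := by
  have hTAΩ : T (A Ω) = A (T Ω) := congr($hTA.eq Ω)
  have hTBΩ : T (B (Γ Ω)) = B (Γ (T Ω)) := congr($hTB.eq Ω)
  rw [← hTAΩ, ← hTBΩ, hΓΩ, ← map_smul T, ← map_smul T, ← map_add]
  exact (congrArg T h).trans (map_zero T)

include hTA hTB hΓ hA hB hΓΩ h

lemma apply_parity_add_apply_eq_zero : s • A (Γ (T Ω)) + t • B (T Ω) = 0 := by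
  have hΓA : Γ (A (T Ω)) = -A (Γ (T Ω)) := congr($hA (T Ω))
  have hΓB : Γ (B (Γ (T Ω))) = -B (Γ (Γ (T Ω))) := congr($hB (Γ (T Ω)))
  have hΓΓ : Γ (Γ (T Ω)) = T Ω := congr($hΓ (T Ω))
  have hΓh := congrArg Γ (apply_add_apply_parity_eq_zero hTA hTB hΓΩ h)
  rw [map_add, map_smul, map_smul, hΓA, hΓB, hΓΓ, map_zero] at hΓh
  simpa only [smul_neg, ← neg_add, neg_eq_zero] using hΓh

lemma add_apply_add_parity_eq_zero : (s • A + t • B) (T Ω + Γ (T Ω)) = 0 := by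
  calc _ = (s • A (T Ω) + t • B (Γ (T Ω))) + (s • A (Γ (T Ω)) + t • B (T Ω)) := by
        simp only [add_apply, smul_apply, map_add]; module
    _ = 0 := by
        rw [apply_add_apply_parity_eq_zero hTA hTB hΓΩ h,
          apply_parity_add_apply_eq_zero hTA hTB hΓ hA hB hΓΩ h, add_zero]

lemma sub_apply_sub_parity_eq_zero : (s • A - t • B) (T Ω - Γ (T Ω)) = 0 := by
  calc _ = (s • A (T Ω) + t • B (Γ (T Ω))) - (s • A (Γ (T Ω)) + t • B (T Ω)) := by
        simp only [sub_apply, smul_apply, map_sub]; module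
    _ = 0 := by
        rw [apply_add_apply_parity_eq_zero hTA hTB hΓΩ h,
          apply_parity_add_apply_eq_zero hTA hTB hΓ hA hB hΓΩ h, sub_zero]

end EvenOdd

lemma sq_sqrt_one_sub_add_sq_sqrt {t : ℝ} (ht : t ∈ Set.Icc 0 1) :
    (√(1 - t) : ℂ) ^ 2 + (√t : ℂ) ^ 2 = 1 := by
  rw [← Complex.ofReal_pow, ← Complex.ofReal_pow, Real.sq_sqrt (sub_nonneg.2 ht.2),
    Real.sq_sqrt ht.1, ← Complex.ofReal_add, sub_add_cancel, Complex.ofReal_one]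

lemma sq_sqrt_one_sub_sub_sq_sqrt {t : ℝ} (ht : t ∈ Set.Icc 0 1) :
    (√(1 - t) : ℂ) ^ 2 - (√t : ℂ) ^ 2 = (1 - 2 * t : ℝ) := by
  rw [← Complex.ofReal_pow, ← Complex.ofReal_pow, Real.sq_sqrt (sub_nonneg.2 ht.2),
    Real.sq_sqrt ht.1, ← Complex.ofReal_sub]
  congr 1
  ring

section QuasiFree

lemma inlₗ_injective {α β : Type*} : Function.Injective (Sum.inlₗ : α → α ⊕ₗ β) :=
  toLex.injective.comp Sum.inl_injective

lemma inrₗ_injective {α β : Type*} : Function.Injective (Sum.inrₗ : β → α ⊕ₗ β) :=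
  toLex.injective.comp Sum.inr_injective

lemma inrₗ_ne_inlₗ {α β : Type*} (b : β) (a : α) : (Sum.inrₗ b : α ⊕ₗ β) ≠ Sum.inlₗ a :=
  toLex.injective.ne Sum.inr_ne_inl

variable {κ Λ : Type*} [LinearOrder Λ] (occ : κ ≃ Finset (Λ ⊕ₗ Λ)) (lam : Λ → ℝ)

/-- The quasi-free annihilation operator `a_l` of symbol `lam`, acting on the Fock space over two
copies of the one-particle modes; in `e_{(A,B)}` the set `B` occupies the left copy and `A` the
right one. -/
def carA (l : Λ) : ℓ²(κ, ℂ) →L[ℂ] ℓ²(κ, ℂ) :=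
  (√(1 - lam l) : ℂ) • star (ann occ (Sum.inrₗ l)) + (√(lam l) : ℂ) • ann occ (Sum.inlₗ l)

/-- The quasi-free operator `b_l` of symbol `lam`, the partner of `a_l` in the commutant: its
product with the parity commutes with every `a_k` and `a_k*`. -/
def carB (l : Λ) : ℓ²(κ, ℂ) →L[ℂ] ℓ²(κ, ℂ) :=
  (√(lam l) : ℂ) • star (ann occ (Sum.inrₗ l)) - (√(1 - lam l) : ℂ) • ann occ (Sum.inlₗ l)

variable {occ lam}

lemma star_carA (l : Λ) : star (carA occ lam l) =
    (√(1 - lam l) : ℂ) • ann occ (Sum.inrₗ l) + (√(lam l) : ℂ) • star (ann occ (Sum.inlₗ l)) := by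
  simp [carA]

lemma star_carB (l : Λ) : star (carB occ lam l) =
    (√(lam l) : ℂ) • ann occ (Sum.inrₗ l) - (√(1 - lam l) : ℂ) • star (ann occ (Sum.inlₗ l)) := by
  simp [carB]

lemma carB_mul_carA (k l : Λ) :
    carB occ lam l * carA occ lam k = -(carA occ lam k * carB occ lam l) := by
  simp only [carA, carB, mul_add, add_mul, mul_sub, sub_mul, smul_mul_smul_comm]
  rw [star_ann_mul_star_ann occ (Sum.inrₗ l), ann_mul_ann occ (Sum.inlₗ l), ann_mul_star_ann,
    ann_mul_star_ann, if_neg (inrₗ_ne_inlₗ k l).symm, if_neg (inrₗ_ne_inlₗ l k).symm]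
  module

lemma carB_mul_star_carA (k l : Λ) :
    carB occ lam l * star (carA occ lam k) = -(star (carA occ lam k) * carB occ lam l) := by
  simp only [star_carA, carB, mul_add, add_mul, mul_sub, sub_mul, smul_mul_smul_comm]
  rw [ann_mul_ann occ (Sum.inlₗ l), star_ann_mul_star_ann occ (Sum.inrₗ l), ann_mul_star_ann,
    ann_mul_star_ann]
  rcases eq_or_ne k l with rfl | hkl
  · simp only [if_true]
    module
  · rw [if_neg (inlₗ_injective.ne hkl.symm), if_neg (inrₗ_injective.ne hkl)]
    module

lemma parity_mul_carA (l : Λ) :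
    parity occ * carA occ lam l = -(carA occ lam l * parity occ) := by
  simp only [carA, mul_add, add_mul, mul_smul_comm, smul_mul_assoc, parity_mul_ann,
    parity_mul_star_ann]
  module

lemma parity_mul_carB (l : Λ) :
    parity occ * carB occ lam l = -(carB occ lam l * parity occ) := by
  simp only [carB, mul_sub, sub_mul, mul_smul_comm, smul_mul_assoc, parity_mul_ann,
    parity_mul_star_ann]
  module

lemma parity_mul_star_carA (l : Λ) :
    parity occ * star (carA occ lam l) = -(star (carA occ lam l) * parity occ) := by
  simp only [star_carA, mul_add, add_mul, mul_smul_comm, smul_mul_assoc, parity_mul_ann,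
    parity_mul_star_ann]
  module

lemma parity_mul_star_carB (l : Λ) :
    parity occ * star (carB occ lam l) = -(star (carB occ lam l) * parity occ) := by
  simp only [star_carB, mul_sub, sub_mul, mul_smul_comm, smul_mul_assoc, parity_mul_ann,
    parity_mul_star_ann]
  module

lemma carB_mul_parity_mem_centralizer (l : Λ) : carB occ lam l * parity occ ∈ Set.centralizer
    ({x | ∃ k, x = carA occ lam k} ∪ {x | ∃ k, x = star (carA occ lam k)}) := by
  rintro _ (⟨k, rfl⟩ | ⟨k, rfl⟩)
  · exact (commute_mul_of_anticommute (carB_mul_carA k l) (parity_mul_carA k)).symm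
  · exact (commute_mul_of_anticommute (carB_mul_star_carA k l) (parity_mul_star_carA k)).symm

lemma star_carB_mul_parity_mem_centralizer (l : Λ) :
    star (carB occ lam l) * parity occ ∈ Set.centralizer
      ({x | ∃ k, x = carA occ lam k} ∪ {x | ∃ k, x = star (carA occ lam k)}) := by
  have hstar : ∀ y ∈ {x | ∃ k, x = carA occ lam k} ∪ {x | ∃ k, x = star (carA occ lam k)},
      star y ∈ {x | ∃ k, x = carA occ lam k} ∪ {x | ∃ k, x = star (carA occ lam k)} := by
    rintro _ (⟨k, rfl⟩ | ⟨k, rfl⟩)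
    · exact Or.inr ⟨k, rfl⟩
    · exact Or.inl ⟨k, star_star _⟩
  have hmem := Set.neg_mem_centralizer
    (Set.star_mem_centralizer' hstar (carB_mul_parity_mem_centralizer l))
  rwa [star_mul, star_parity, parity_mul_star_carB, neg_neg] at hmem

variable {l : Λ} (hl : lam l ∈ Set.Icc 0 1)

include hl in
lemma star_carA_add_star_carB :
    (√(1 - lam l) : ℂ) • star (carA occ lam l) + (√(lam l) : ℂ) • star (carB occ lam l) =
      ann occ (Sum.inrₗ l) := by
  rw [star_carA, star_carB]
  calc _ = ((√(1 - lam l) : ℂ) ^ 2 + (√(lam l) : ℂ) ^ 2) • ann occ (Sum.inrₗ l) := by module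
    _ = ann occ (Sum.inrₗ l) := by rw [sq_sqrt_one_sub_add_sq_sqrt hl, one_smul]

include hl in
lemma star_carA_sub_star_carB :
    (√(1 - lam l) : ℂ) • star (carA occ lam l) - (√(lam l) : ℂ) • star (carB occ lam l) =
      ((1 - 2 * lam l : ℝ) : ℂ) • ann occ (Sum.inrₗ l) +
        ((2 * (√(1 - lam l) * √(lam l)) : ℝ) : ℂ) • star (ann occ (Sum.inlₗ l)) := by
  rw [star_carA, star_carB, ← sq_sqrt_one_sub_sub_sq_sqrt hl]
  push_cast
  module

include hl in
lemma carA_sub_carB :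
    (√(lam l) : ℂ) • carA occ lam l - (√(1 - lam l) : ℂ) • carB occ lam l =
      ann occ (Sum.inlₗ l) := by
  rw [carA, carB]
  calc _ = ((√(1 - lam l) : ℂ) ^ 2 + (√(lam l) : ℂ) ^ 2) • ann occ (Sum.inlₗ l) := by module
    _ = ann occ (Sum.inlₗ l) := by rw [sq_sqrt_one_sub_add_sq_sqrt hl, one_smul]

end QuasiFree

section VacuumImage

lemma coeff_eq_zero_of_not_summable {𝕜 κ ι : Type*} [RCLike 𝕜] {v : ℓ²(κ, 𝕜)} {p : κ} {f : ι → κ}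
    (hf : f.Injective) {s : ι → ℝ} (hs : ¬ Summable s)
    (h : ∀ᶠ i in cofinite, ‖s i‖ * ‖v p‖ ^ 2 ≤ ‖v (f i)‖ ^ 2) : v p = 0 := by
  by_contra hp
  have hp2 : ‖v p‖ ^ 2 ≠ 0 := pow_ne_zero 2 (norm_ne_zero_iff.2 hp)
  have hv : Summable fun i => ‖v (f i)‖ ^ 2 := by
    simpa [Function.comp_def] using ((lp.memℓp v).summable (by norm_num)).comp_injective hf
  refine hs ((summable_mul_right_iff hp2).1 (Summable.of_norm_bounded_eventually hv ?_))
  simpa only [norm_mul, norm_pow, norm_norm] using h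

lemma not_summable_mul_one_sub_of_mem_Icc {ι : Type*} [Infinite ι] {ε : ℝ} (hε : 0 < ε)
    {s : ι → ℝ} (hs : ∀ i, s i ∈ Set.Icc ε (1 - ε)) :
    ¬ Summable fun i => s i * (1 - s i) := by
  intro h
  have hconst : Summable fun _ : ι => ε * ε := by
    refine h.of_nonneg_of_le (fun _ => by positivity) fun i => ?_
    exact mul_le_mul (hs i).1 (by linarith [(hs i).2]) hε.le (hε.le.trans (hs i).1)
  exact (mul_pos hε hε).ne' ((summable_const_iff _).1 hconst)

variable {κ Λ : Type*} [LinearOrder Λ] {occ : κ ≃ Finset (Λ ⊕ₗ Λ)}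

lemma injective_flipMode_flipMode (p : κ) : Function.Injective fun l : Λ =>
    flipMode occ (Sum.inrₗ l) (flipMode occ (Sum.inlₗ l) p) := by
  intro k l h
  by_contra hkl
  have hmem := congr(Sum.inlₗ k ∈ occ $h)
  simp [mem_occ_flipMode_self, mem_occ_flipMode_of_ne, (inrₗ_ne_inlₗ _ _).symm,
    inlₗ_injective.ne hkl] at hmem

variable {lam : Λ → ℝ} {T : ℓ²(κ, ℂ) →L[ℂ] ℓ²(κ, ℂ)} {Ω : ℓ²(κ, ℂ)}
  (hΓΩ : parity occ Ω = Ω) (hΩ : ∀ i, ann occ i Ω = 0) {p : κ}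

section Mode

variable {l : Λ} (hl : lam l ∈ Set.Icc 0 1)
  (hTA : Commute T (carA occ lam l)) (hTA' : Commute T (star (carA occ lam l)))
  (hTB : Commute T (carB occ lam l * parity occ))
  (hTB' : Commute T (star (carB occ lam l) * parity occ))

include hΓΩ hΩ hl

include hTA hTB in
lemma ann_inlₗ_even_part_eq_zero :
    ann occ (Sum.inlₗ l) (T Ω + parity occ (T Ω)) = 0 := by
  have hsum : (√(lam l) : ℂ) • carA occ lam l + (-√(1 - lam l) : ℂ) • carB occ lam l =
      ann occ (Sum.inlₗ l) := by rw [← carA_sub_carB hl, neg_smul, ← sub_eq_add_neg]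
  rw [← hsum]
  exact add_apply_add_parity_eq_zero hTA hTB (parity_mul_self occ) (parity_mul_carA l)
    (parity_mul_carB l) hΓΩ (hsum ▸ hΩ _)

include hTA' hTB'

lemma ann_inrₗ_even_part_eq_zero :
    ann occ (Sum.inrₗ l) (T Ω + parity occ (T Ω)) = 0 := by
  rw [← star_carA_add_star_carB hl]
  exact add_apply_add_parity_eq_zero hTA' hTB' (parity_mul_self occ) (parity_mul_star_carA l)
    (parity_mul_star_carB l) hΓΩ (by rw [star_carA_add_star_carB hl, hΩ])

lemma ann_inrₗ_add_star_ann_inlₗ_odd_part_eq_zero :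
    ((1 - 2 * lam l : ℝ) : ℂ) • ann occ (Sum.inrₗ l) (T Ω - parity occ (T Ω)) +
      ((2 * (√(1 - lam l) * √(lam l)) : ℝ) : ℂ) •
        star (ann occ (Sum.inlₗ l)) (T Ω - parity occ (T Ω)) = 0 := by
  have h := sub_apply_sub_parity_eq_zero hTA' hTB' (parity_mul_self occ) (parity_mul_star_carA l)
    (parity_mul_star_carB l) hΓΩ (s := √(1 - lam l)) (t := √(lam l))
    (by rw [star_carA_add_star_carB hl, hΩ])
  rwa [star_carA_sub_star_carB hl] at h

end Mode

section Future

variable {F : Set Λ} (hlam : ∀ l, lam l ∈ Set.Icc 0 1)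
  (hTA : ∀ l ∈ F, Commute T (carA occ lam l) ∧ Commute T (star (carA occ lam l)))
  (hT : T ∈ Set.centralizer (Set.centralizer
    ({x | ∃ l, x = carA occ lam l} ∪ {x | ∃ l, x = star (carA occ lam l)})))

include hΓΩ hΩ hlam hTA hT

lemma coeff_eq_zero_of_even {l : Λ} (hl : l ∈ F) (hp : Even (occ p).card)
    (h : Sum.inrₗ l ∈ occ p ∨ Sum.inlₗ l ∈ occ p) : T Ω p = 0 := by
  rcases h with h | h
  · exact coeff_eq_zero_of_ann_even_part_eq_zero (ann_inrₗ_even_part_eq_zero hΓΩ hΩ (hlam l)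
      (hTA l hl).2 (hT _ (star_carB_mul_parity_mem_centralizer l)).symm) hp h
  · exact coeff_eq_zero_of_ann_even_part_eq_zero (ann_inlₗ_even_part_eq_zero hΓΩ hΩ (hlam l)
      (hTA l hl).1 (hT _ (carB_mul_parity_mem_centralizer l)).symm) hp h

lemma coeff_eq_zero_of_odd (hF : ¬ Summable fun l : F => lam l * (1 - lam l))
    (hp : Odd (occ p).card) : T Ω p = 0 := by
  have hinj := (injective_flipMode_flipMode (occ := occ) p).comp (Subtype.val_injective (p := F))
  have hr : ∀ᶠ l : F in cofinite, Sum.inrₗ l.1 ∉ occ p :=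
    (inrₗ_injective.comp Subtype.val_injective).tendsto_cofinite.eventually
      (occ p).eventually_cofinite_notMem
  have hl : ∀ᶠ l : F in cofinite, Sum.inlₗ l.1 ∉ occ p :=
    (inlₗ_injective.comp Subtype.val_injective).tendsto_cofinite.eventually
      (occ p).eventually_cofinite_notMem
  have hz : (T Ω - parity occ (T Ω)) p = 0 := by
    refine coeff_eq_zero_of_not_summable hinj hF ?_
    filter_upwards [hr, hl] with l hrl hll
    rw [Real.norm_of_nonneg (mul_nonneg (hlam l.1).1 (sub_nonneg.2 (hlam l.1).2))]
    exact mul_sq_norm_le_of_smul_ann_add_smul_star_ann (inrₗ_ne_inlₗ _ _) (hlam l.1)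
      (ann_inrₗ_add_star_ann_inlₗ_odd_part_eq_zero hΓΩ hΩ (hlam l.1) (hTA l.1 l.2).2
        (hT _ (star_carB_mul_parity_mem_centralizer l.1)).symm) hrl hll
  rw [coeff_sub_parity _ hp] at hz
  exact (mul_eq_zero.1 hz).resolve_left two_ne_zero

end Future

end VacuumImage

section Concrete

/-- The occupied modes of `e_{(A,B)}`. The modes of `B` come first in the ordering, since creating
a mode of `A` carries the sign `(-1)^{card B}`. -/
def carOcc : Finset ℤ × Finset ℤ ≃ Finset (ℤ ⊕ₗ ℤ) :=
  (Equiv.prodComm _ _).trans (Finset.sumEquiv.symm.toEquiv.trans (Equiv.finsetCongr toLex))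

lemma carOcc_apply (A B : Finset ℤ) :
    carOcc (A, B) = (B.disjSum A).map toLex.toEmbedding := rfl

lemma inrₗ_mem_carOcc {l : ℤ} {A B : Finset ℤ} : Sum.inrₗ l ∈ carOcc (A, B) ↔ l ∈ A := by
  simp [carOcc_apply, Sum.inrₗ]

lemma inlₗ_mem_carOcc {l : ℤ} {A B : Finset ℤ} : Sum.inlₗ l ∈ carOcc (A, B) ↔ l ∈ B := by
  simp [carOcc_apply, Sum.inlₗ]

lemma card_carOcc (A B : Finset ℤ) : (carOcc (A, B)).card = A.card + B.card := by
  rw [carOcc_apply, Finset.card_map, Finset.card_disjSum, add_comm]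

-- Stated for any instance, since `ann` takes its decidable equality from the linear order.
lemma flipMode_carOcc_inrₗ [DecidableEq (ℤ ⊕ₗ ℤ)] (l : ℤ) (A B : Finset ℤ) :
    flipMode carOcc (Sum.inrₗ l) (A, B) = (A ∆ {l}, B) := by
  apply carOcc.injective
  rw [occ_flipMode]
  ext (k | k)
  · change Sum.inlₗ k ∈ _ ↔ Sum.inlₗ k ∈ _
    simp [Finset.mem_symmDiff, inlₗ_mem_carOcc, (inrₗ_ne_inlₗ l k).symm]
  · change Sum.inrₗ k ∈ _ ↔ Sum.inrₗ k ∈ _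
    simp [Finset.mem_symmDiff, inrₗ_mem_carOcc, inrₗ_injective.eq_iff]

lemma flipMode_carOcc_inlₗ [DecidableEq (ℤ ⊕ₗ ℤ)] (l : ℤ) (A B : Finset ℤ) :
    flipMode carOcc (Sum.inlₗ l) (A, B) = (A, B ∆ {l}) := by
  apply carOcc.injective
  rw [occ_flipMode]
  ext (k | k)
  · change Sum.inlₗ k ∈ _ ↔ Sum.inlₗ k ∈ _
    simp [Finset.mem_symmDiff, inlₗ_mem_carOcc, inlₗ_injective.eq_iff]
  · change Sum.inrₗ k ∈ _ ↔ Sum.inrₗ k ∈ _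
    simp [Finset.mem_symmDiff, inrₗ_mem_carOcc]

lemma jwSign_carOcc_inrₗ (l : ℤ) (A B : Finset ℤ) :
    jwSign (Sum.inrₗ l) (carOcc (A, B)) = (-1) ^ B.card * (-1) ^ nlt l A := by
  have hfilter : (carOcc (A, B)).filter (· < Sum.inrₗ l) = carOcc (A.filter (· < l), B) := by
    ext (k | k)
    · change Sum.inlₗ k ∈ _ ↔ Sum.inlₗ k ∈ _
      simp [inlₗ_mem_carOcc]
    · change Sum.inrₗ k ∈ _ ↔ Sum.inrₗ k ∈ _
      simp [inrₗ_mem_carOcc]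
  rw [jwSign, hfilter, card_carOcc, pow_add, mul_comm, nlt]

lemma jwSign_carOcc_inlₗ (l : ℤ) (A B : Finset ℤ) :
    jwSign (Sum.inlₗ l) (carOcc (A, B)) = (-1) ^ nlt l B := by
  have hfilter : (carOcc (A, B)).filter (· < Sum.inlₗ l) = carOcc (∅, B.filter (· < l)) := by
    ext (k | k)
    · change Sum.inlₗ k ∈ _ ↔ Sum.inlₗ k ∈ _
      simp [inlₗ_mem_carOcc]
    · change Sum.inrₗ k ∈ _ ↔ Sum.inrₗ k ∈ _
      simp [inrₗ_mem_carOcc]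
  rw [jwSign, hfilter, card_carOcc, Finset.card_empty, zero_add, nlt]

lemma IsCAR_a.eq_carA {lam : ℤ → ℝ} {a : ℤ → CARSpace →L[ℂ] CARSpace} (ha : IsCAR_a lam a) :
    a = carA carOcc lam := by
  ext1 l
  refine lp.ext_continuousLinearMap ENNReal.ofNat_ne_top fun ⟨A, B⟩ =>
    ContinuousLinearMap.ext_ring ?_
  change a l (carE (A, B)) = carA carOcc lam l (lp.single 2 (A, B) 1)
  rw [ha, carA, add_apply, smul_apply, smul_apply, star_ann_single, ann_single,
    jwSign_carOcc_inrₗ, jwSign_carOcc_inlₗ]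
  simp only [flipMode_carOcc_inrₗ, flipMode_carOcc_inlₗ, inrₗ_mem_carOcc, inlₗ_mem_carOcc, carE]
  by_cases hA : l ∈ A <;> by_cases hB : l ∈ B <;>
    simp [hA, hB, symmDiff_singleton_of_mem, symmDiff_singleton_of_notMem, smul_smul, mul_assoc]

/-- The closed linear span of the `e_{(A,B)}` with `A, B ⊆ P` and `card A ≡ card B (mod 2)`. -/
def evenSpan (P : Set ℤ) : Submodule ℂ CARSpace :=
  (Submodule.span ℂ {v | ∃ A B : Finset ℤ, (∀ n ∈ A, n ∈ P) ∧ (∀ n ∈ B, n ∈ P) ∧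
    A.card % 2 = B.card % 2 ∧ v = carE (A, B)}).topologicalClosure

lemma mem_evenSpan_of_coeff {P : Set ℤ} {v : CARSpace}
    (h : ∀ A B : Finset ℤ, v (A, B) ≠ 0 →
      (∀ n ∈ A, n ∈ P) ∧ (∀ n ∈ B, n ∈ P) ∧ A.card % 2 = B.card % 2) : v ∈ evenSpan P := by
  refine (Submodule.isClosed_topologicalClosure _).mem_of_tendsto
    (lp.hasSum_single ENNReal.ofNat_ne_top v)
    (.of_forall fun s => Submodule.sum_mem _ fun p _ => ?_)
  by_cases hp : v p = 0
  · rw [hp, lp.single_zero]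
    exact Submodule.zero_mem _
  · have hE : lp.single 2 p (v p) = v p • carE p := by
      rw [carE, ← lp.single_smul, smul_eq_mul, mul_one]
    obtain ⟨hA, hB, hcard⟩ := h p.1 p.2 hp
    rw [hE]
    exact Submodule.smul_mem _ _ (Submodule.le_topologicalClosure _
      (Submodule.subset_span ⟨p.1, p.2, hA, hB, hcard, rfl⟩))

theorem stmt17_general (P : Set ℤ) (lam : ℤ → ℝ) (hlam : ∀ l, lam l ∈ Set.Icc 0 1)
    (hP : ¬ Summable fun l : ↥Pᶜ => lam l * (1 - lam l))
    (a : ℤ → CARSpace →L[ℂ] CARSpace) (ha : IsCAR_a lam a)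
    (T : CARSpace →L[ℂ] CARSpace)
    (hTcomm : ∀ l ∉ P, T * a l = a l * T ∧ T * star (a l) = star (a l) * T)
    (hTmem : T ∈ Set.centralizer (Set.centralizer
      ({x | ∃ l : ℤ, x = a l} ∪ {x | ∃ l : ℤ, x = star (a l)}))) :
    T carΩ ∈ evenSpan P := by
  obtain rfl := ha.eq_carA
  have hΓΩ : parity carOcc carΩ = carΩ := parity_single_of_occ_eq_empty carOcc rfl 1
  have hΩ (i) : ann carOcc i carΩ = 0 := ann_single_of_occ_eq_empty rfl i 1
  refine mem_evenSpan_of_coeff fun A B hAB => ?_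
  have heven : Even (carOcc (A, B)).card := Nat.not_odd_iff_even.1 fun hodd =>
    hAB (coeff_eq_zero_of_odd hΓΩ hΩ hlam hTcomm hTmem hP hodd)
  have hmem (l) (hl : Sum.inrₗ l ∈ carOcc (A, B) ∨ Sum.inlₗ l ∈ carOcc (A, B)) : l ∈ P :=
    by_contra fun hlP => hAB (coeff_eq_zero_of_even hΓΩ hΩ hlam hTcomm hTmem hlP heven hl)
  refine ⟨fun n hn => hmem n (.inl (inrₗ_mem_carOcc.2 hn)),
    fun n hn => hmem n (.inr (inlₗ_mem_carOcc.2 hn)), ?_⟩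
  rw [card_carOcc] at heven
  grind

end Concrete

/-- with past `P = {n < 0}` and future `F = {n ≥ 0}`, assume
`ε ≤ λ_l ≤ 1−ε`, `λ_l ≠ 1/2` for all `l`, with `0 < ε < 1/2`. Let
`S = {a_l} ∪ {a_l*} ⊆ B(H)`, `S′` its commutant and `S″` the commutant of `S′`. If
`T ∈ B(H)` commutes with `a_l` and `a_l*` for every `l ∈ F = {n ≥ 0}` and `T ∈ S″`, then
`TΩ` belongs to the closed linear span of
`{e_{(A,B)} : A, B ⊆ P finite, card A ≡ card B (mod 2)}`. -/
theorem stmt17 (lam : ℤ → ℝ) (ε : ℝ) (hε : 0 < ε ∧ ε < 1 / 2)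
    (hlam : ∀ l : ℤ, ε ≤ lam l ∧ lam l ≤ 1 - ε ∧ lam l ≠ 1 / 2)
    (a : ℤ → CARSpace →L[ℂ] CARSpace) (ha : IsCAR_a lam a)
    (T : CARSpace →L[ℂ] CARSpace)
    (hTcomm : ∀ l : ℤ, 0 ≤ l → T * a l = a l * T ∧ T * star (a l) = star (a l) * T)
    (hTmem : T ∈ Set.centralizer (Set.centralizer
      ({x | ∃ l : ℤ, x = a l} ∪ {x | ∃ l : ℤ, x = star (a l)}))) :
    T carΩ ∈ pastSpan := by
  have : Infinite ↥(Set.Iio (0 : ℤ))ᶜ := by rw [Set.compl_Iio]; infer_instance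
  exact stmt17_general (Set.Iio 0) lam
    (fun l => ⟨hε.1.le.trans (hlam l).1, (hlam l).2.1.trans (sub_le_self 1 hε.1.le)⟩)
    (not_summable_mul_one_sub_of_mem_Icc hε.1 fun l => ⟨(hlam l).1, (hlam l).2.1⟩)
    a ha T (fun l hl => hTcomm l (not_lt.1 hl)) hTmem

end
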